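/- arXiv:2512.02661 — 2 statements merged into one kernel-verified Lean document; each statement's English description precedes it below -/
import Mathlib

section
/- For every γ ∈ (0,1) there exists a constant c > 0 depending only on γ such that the following holds. Let W be a standard planar Brownian motion. Then for every R > 0, every y ∈ ℝ² with ‖y‖ ≤ R, and every ε with 0 < ε ≤ γR/2, the probability that simultaneously W_{R²} ∈ B(y, ε) and ‖W_t − (t/R²)·y‖ ≤ γR for all t ∈ [0, R²] is at least c·(ε/R)². -/
open MeasureTheory ProbabilityTheory Real

/-- The centered Gaussian measure on the Euclidean plane with covariance matrix `v • Id₂`,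
defined via its density with respect to the Lebesgue measure. -/
noncomputable def gaussianPlane (v : ℝ) : Measure (EuclideanSpace ℝ (Fin 2)) :=
  volume.withDensity fun z => ENNReal.ofReal ((2 * π * v)⁻¹ * Real.exp (-‖z‖ ^ 2 / (2 * v)))

/-- `W` is a standard planar Brownian motion on the probability space `Ω`: it starts at `0`,
has a.s. continuous paths, and for `0 ≤ s ≤ t` the increment `W t - W s` is a centered
Gaussian vector with covariance `(t - s) • Id₂`, independent of the σ-algebra generated
by `(W u)_{0 ≤ u ≤ s}`. -/
structure IsPlanarBM {Ω : Type*} [MeasureSpace Ω]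
    (W : ℝ → Ω → EuclideanSpace ℝ (Fin 2)) : Prop where
  measurable : ∀ t : ℝ, Measurable (W t)
  init : ∀ᵐ ω : Ω, W 0 ω = 0
  cont : ∀ᵐ ω : Ω, Continuous fun t => W t ω
  incr_law : ∀ s t : ℝ, 0 ≤ s → s < t →
    Measure.map (fun ω => W t ω - W s ω) ℙ = gaussianPlane (t - s)
  incr_indep : ∀ s t : ℝ, 0 ≤ s → s ≤ t →
    Indep (MeasurableSpace.comap (fun ω => W t ω - W s ω) inferInstance)
      (⨆ u ∈ Set.Icc (0 : ℝ) s, MeasurableSpace.comap (W u) inferInstance) ℙ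

/-- The σ-algebra generated by `(W u)_{0 ≤ u ≤ s}`. -/
@[reducible]
def pastSigma {Ω E : Type*} [MeasurableSpace E] (W : ℝ → Ω → E) (s : ℝ) : MeasurableSpace Ω :=
  ⨆ u ∈ Set.Icc (0 : ℝ) s, MeasurableSpace.comap (W u) inferInstance

lemma measurable_pastSigma {Ω E : Type*} [MeasurableSpace E] (W : ℝ → Ω → E) {u s : ℝ}
    (hu : 0 ≤ u) (hus : u ≤ s) : Measurable[pastSigma W s] (W u) :=
  (comap_measurable (W u)).mono
    (le_iSup₂_of_le (f := fun u (_ : u ∈ Set.Icc (0 : ℝ) s) =>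
      MeasurableSpace.comap (W u) inferInstance) u ⟨hu, hus⟩ le_rfl) le_rfl

lemma pastSigma_mono {Ω E : Type*} [MeasurableSpace E] (W : ℝ → Ω → E) {s t : ℝ}
    (hst : s ≤ t) : pastSigma W s ≤ pastSigma W t :=
  iSup₂_le fun _ hu => (measurable_pastSigma W hu.1 (hu.2.trans hst)).comap_le

lemma pastSigma_le {Ω E : Type*} [m : MeasurableSpace Ω] [MeasurableSpace E] {W : ℝ → Ω → E}
    (hW : ∀ t, Measurable (W t)) (s : ℝ) : pastSigma W s ≤ m :=
  iSup₂_le fun u _ => (hW u).comap_le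

lemma measurableSet_norm_sub_le {Ω E : Type*} {_ : MeasurableSpace Ω} [NormedAddCommGroup E]
    [MeasurableSpace E] [BorelSpace E] {X : Ω → E} (hX : Measurable X)
    (a : E) (r : ℝ) : MeasurableSet {ω | ‖X ω - a‖ ≤ r} := by
  have : {ω | ‖X ω - a‖ ≤ r} = X ⁻¹' Metric.closedBall a r := by
    ext ω; simp [dist_eq_norm]
  rw [this]
  exact hX Metric.isClosed_closedBall.measurableSet

lemma le_gaussianPlane_ball {c : EuclideanSpace ℝ (Fin 2)} {ε r : ℝ} (hε : 0 ≤ ε) (hεr : ε ≤ r)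
    (hr : 0 < r) (hc : ‖c‖ ≤ 2 * r) :
    ENNReal.ofReal (exp (-9 / 2) / 2 * (ε / r) ^ 2) ≤
      gaussianPlane (r ^ 2) (Metric.ball c ε) := by
  rw [gaussianPlane, withDensity_apply _ Metric.isOpen_ball.measurableSet]
  calc _ = ∫⁻ _ in Metric.ball c ε, ENNReal.ofReal ((2 * π * r ^ 2)⁻¹ * exp (-9 / 2)) := by
        rw [setLIntegral_const, EuclideanSpace.volume_ball_fin_two, ← ENNReal.ofReal_pow hε,
          ← ENNReal.ofReal_mul (by positivity), ← ENNReal.ofReal_mul (by positivity)]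
        congr 1
        field_simp
    _ ≤ _ := by
        refine setLIntegral_mono' Metric.isOpen_ball.measurableSet fun z hz => ?_
        refine ENNReal.ofReal_le_ofReal (mul_le_mul_of_nonneg_left ?_ (by positivity))
        rw [exp_le_exp, div_le_div_iff₀ (by norm_num) (by positivity)]
        have h1 : ‖z‖ ≤ 3 * r := by
          have := norm_le_norm_add_norm_sub' z c
          rw [Metric.mem_ball, dist_eq_norm] at hz
          linarith
        nlinarith [norm_nonneg z]

lemma gaussianPlane_ball_le {c : EuclideanSpace ℝ (Fin 2)} {ε r v : ℝ} (hε : 0 ≤ ε) (hεr : ε ≤ r)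
    (hr : 0 < r) (hv : 0 < v) (hvr : v ≤ r ^ 2) (hc : 5 * r ≤ ‖c‖) :
    gaussianPlane v (Metric.ball c ε) ≤ ENNReal.ofReal (exp (-8) / 2 * (ε / r) ^ 2) := by
  rw [gaussianPlane, withDensity_apply _ Metric.isOpen_ball.measurableSet]
  calc _ ≤ ∫⁻ _ in Metric.ball c ε, ENNReal.ofReal ((2 * π * r ^ 2)⁻¹ * exp (-8)) := by
        refine setLIntegral_mono' Metric.isOpen_ball.measurableSet fun z hz =>
          ENNReal.ofReal_le_ofReal ?_
        have h1 : 4 * r ≤ ‖z‖ := by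
          have := norm_le_norm_add_norm_sub' c z
          rw [Metric.mem_ball, dist_eq_norm, ← norm_neg, neg_sub] at hz
          linarith
        set u := r ^ 2 / v with hu
        have hu1 : 1 ≤ u := (one_le_div hv).2 hvr
        have h2 : exp (-‖z‖ ^ 2 / (2 * v)) ≤ exp (-8 * u) := by
          rw [exp_le_exp, hu, ← mul_div_assoc, div_le_div_iff₀ (by positivity) hv]
          nlinarith [mul_le_mul_of_nonneg_right
            (pow_le_pow_left₀ (by positivity) h1 2) hv.le]
        have h3 : u * exp (-8 * u) ≤ exp (-8) := by
          have h4 : u ≤ exp (8 * (u - 1)) := by linarith [add_one_le_exp (8 * (u - 1))]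
          calc u * exp (-8 * u) ≤ exp (8 * (u - 1)) * exp (-8 * u) := by gcongr
            _ = exp (-8) := by rw [← exp_add]; ring_nf
        calc (2 * π * v)⁻¹ * exp (-‖z‖ ^ 2 / (2 * v)) ≤ (2 * π * v)⁻¹ * exp (-8 * u) := by gcongr
          _ = (2 * π * r ^ 2)⁻¹ * (u * exp (-8 * u)) := by rw [hu]; field_simp
          _ ≤ _ := by gcongr
    _ = _ := by
        rw [setLIntegral_const, EuclideanSpace.volume_ball_fin_two, ← ENNReal.ofReal_pow hε,
          ← ENNReal.ofReal_mul (by positivity), ← ENNReal.ofReal_mul (by positivity)]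
        congr 1
        field_simp

/-- The constant lost at each step of the chaining argument. -/
noncomputable def stepConst : ℝ := exp (-9 / 2) / 2 - exp (-8) / 2

lemma stepConst_pos : 0 < stepConst := by
  have : exp (-8) < exp (-9 / 2) := exp_lt_exp.2 (by norm_num)
  unfold stepConst
  linarith

lemma norm_smul_sub_le_of_mem_step {y : EuclideanSpace ℝ (Fin 2)} {r t : ℝ} {N k : ℕ}
    (hr : 0 < r) (hy : ‖y‖ ≤ (N + 1) * r) (hkt : k * r ^ 2 ≤ t) (htk : t ≤ (k + 1) * r ^ 2) :
    ‖((k : ℝ) / ((N : ℝ) + 1) ^ 2) • y - (t / (((N : ℝ) + 1) * r) ^ 2) • y‖ ≤ r := by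
  have hN : (0 : ℝ) < N + 1 := by positivity
  rw [← sub_smul, norm_smul, norm_eq_abs]
  have h1 : |(k : ℝ) / (N + 1) ^ 2 - t / ((N + 1) * r) ^ 2| ≤ 1 / ((N : ℝ) + 1) ^ 2 := by
    have : (k : ℝ) / (N + 1) ^ 2 - t / ((N + 1) * r) ^ 2 =
        (k - t / r ^ 2) * (1 / (N + 1) ^ 2) := by field_simp
    rw [this, abs_mul, abs_of_pos (a := 1 / ((N : ℝ) + 1) ^ 2) (by positivity)]
    refine mul_le_of_le_one_left (by positivity) ?_
    have h2 : (k : ℝ) ≤ t / r ^ 2 := (le_div_iff₀ (by positivity)).2 hkt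
    have h3 : t / r ^ 2 ≤ k + 1 := (div_le_iff₀ (by positivity)).2 htk
    rw [abs_le]
    constructor <;> linarith
  calc _ ≤ 1 / ((N : ℝ) + 1) ^ 2 * ((N + 1) * r) := by gcongr
    _ = r / (N + 1) := by field_simp
    _ ≤ r := div_le_self hr.le (by linarith [N.cast_nonneg (α := ℝ)])

/-- The event that at time `k * r ^ 2` the motion is within `r` of the point reached by a uniform
motion along the segment, having stayed within `7 * r` of that motion at the times in `S`. -/
def chainEvent {Ω : Type*} (W : ℝ → Ω → EuclideanSpace ℝ (Fin 2)) (r : ℝ) (N : ℕ)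
    (y : EuclideanSpace ℝ (Fin 2)) (S : Finset ℝ) (k : ℕ) : Set Ω :=
  {ω | ‖W (k * r ^ 2) ω - ((k : ℝ) / ((N : ℝ) + 1) ^ 2) • y‖ ≤ r ∧
    ∀ t ∈ S, 0 ≤ t → t < k * r ^ 2 → ‖W t ω - (t / (((N : ℝ) + 1) * r) ^ 2) • y‖ ≤ 7 * r}

lemma measurableSet_chainEvent {Ω : Type*} (W : ℝ → Ω → EuclideanSpace ℝ (Fin 2)) (r : ℝ) (N : ℕ)
    (y : EuclideanSpace ℝ (Fin 2)) (S : Finset ℝ) (k : ℕ) :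
    MeasurableSet[pastSigma W (k * r ^ 2)] (chainEvent W r N y S k) := by
  refine MeasurableSet.inter ?_ ?_
  · exact measurableSet_norm_sub_le (measurable_pastSigma W (by positivity) le_rfl) _ _
  · change MeasurableSet[pastSigma W (k * r ^ 2)] {ω | ∀ t ∈ S, 0 ≤ t → t < k * r ^ 2 →
      ‖W t ω - (t / (((N : ℝ) + 1) * r) ^ 2) • y‖ ≤ 7 * r}
    simp only [Set.ofPred_forall]
    exact Finset.measurableSet_biInter _ fun t _ => MeasurableSet.iInter fun h0 =>
      MeasurableSet.iInter fun h1 =>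
        measurableSet_norm_sub_le (measurable_pastSigma W h0 h1.le) _ _

section BrownianMotion

variable {Ω : Type*} [MeasureSpace Ω] [IsProbabilityMeasure (ℙ : Measure Ω)]
  {W : ℝ → Ω → EuclideanSpace ℝ (Fin 2)}

/-- The Markov property at time `s`, for the event of landing in a ball at time `t`. -/
lemma IsPlanarBM.measure_inter_ball (hW : IsPlanarBM W) {s t : ℝ} (hs : 0 ≤ s) (hst : s < t)
    {A : Set Ω} (hA : MeasurableSet[pastSigma W s] A) (b : EuclideanSpace ℝ (Fin 2)) (ε : ℝ) :
    ℙ (A ∩ {ω | W t ω ∈ Metric.ball b ε}) =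
      ∫⁻ ω in A, gaussianPlane (t - s) (Metric.ball (b - W s ω) ε) := by
  have hle := pastSigma_le hW.measurable s
  have hA' : MeasurableSet A := hle _ hA
  let g : Ω → Prop × EuclideanSpace ℝ (Fin 2) := fun ω => (ω ∈ A, W s ω)
  have hg : Measurable[pastSigma W s] g :=
    Measurable.prodMk ((@measurable_mem Ω A (pastSigma W s)).2 hA)
      (measurable_pastSigma W hs le_rfl)
  have hg' : Measurable g := hg.mono hle le_rfl
  have hZ : Measurable fun ω => W t ω - W s ω := (hW.measurable t).sub (hW.measurable s)
  have hind : IndepFun g (fun ω => W t ω - W s ω) ℙ := by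
    rw [IndepFun_iff_Indep]
    exact indep_of_indep_of_le_left (hW.incr_indep s t hs hst.le).symm hg.comap_le
  have hmap := (indepFun_iff_map_prod_eq_prod_map_map hg'.aemeasurable hZ.aemeasurable).1 hind
  have : IsProbabilityMeasure (gaussianPlane (t - s)) := by
    rw [← hW.incr_law s t hs hst]
    exact Measure.isProbabilityMeasure_map hZ.aemeasurable
  let S : Set ((Prop × EuclideanSpace ℝ (Fin 2)) × EuclideanSpace ℝ (Fin 2)) :=
    {q | q.1.1 ∧ q.1.2 + q.2 ∈ Metric.ball b ε}
  have hS : MeasurableSet S := by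
    refine MeasurableSet.inter ?_ ?_
    · exact measurableSet_setOfPred.2 (measurable_fst.comp measurable_fst)
    · exact ((measurable_snd.comp measurable_fst).add measurable_snd)
        Metric.isOpen_ball.measurableSet
  have hpre : A ∩ {ω | W t ω ∈ Metric.ball b ε} =
      (fun ω => (g ω, W t ω - W s ω)) ⁻¹' S := by
    ext ω
    simp [S, g]
  rw [hpre, ← Measure.map_apply (hg'.prodMk hZ) hS, hmap, hW.incr_law s t hs hst,
    Measure.prod_apply hS, lintegral_map (measurable_measure_prodMk_left hS) hg',
    ← lintegral_indicator hA']
  refine lintegral_congr fun ω => ?_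
  by_cases hω : ω ∈ A
  · rw [Set.indicator_of_mem hω]
    congr 1
    ext z
    simp only [S, g, hω, Set.mem_preimage, Set.mem_ofPred_eq, true_and, Metric.mem_ball,
      dist_eq_norm]
    rw [show W s ω + z - b = z - (b - W s ω) by abel]
  · rw [Set.indicator_of_notMem hω]
    simp [S, g, hω]

lemma IsPlanarBM.measure_inter_ball_le (hW : IsPlanarBM W) {s t r ε : ℝ} (hs : 0 ≤ s)
    (hst : s < t) (hr : 0 < r) (htr : t - s ≤ r ^ 2) (hε : 0 ≤ ε) (hεr : ε ≤ r)
    {A : Set Ω} (hA : MeasurableSet[pastSigma W s] A) {b : EuclideanSpace ℝ (Fin 2)}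
    (hb : ∀ ω ∈ A, 5 * r ≤ ‖b - W s ω‖) :
    ℙ (A ∩ {ω | W t ω ∈ Metric.ball b ε}) ≤
      ENNReal.ofReal (exp (-8) / 2 * (ε / r) ^ 2) * ℙ A := by
  rw [hW.measure_inter_ball hs hst hA, ← setLIntegral_const]
  exact setLIntegral_mono' (pastSigma_le hW.measurable s _ hA) fun ω hω =>
    gaussianPlane_ball_le hε hεr hr (sub_pos.2 hst) htr (hb ω hω)

lemma IsPlanarBM.le_measure_inter_ball (hW : IsPlanarBM W) {s r ε : ℝ} (hs : 0 ≤ s)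
    (hr : 0 < r) (hε : 0 ≤ ε) (hεr : ε ≤ r)
    {A : Set Ω} (hA : MeasurableSet[pastSigma W s] A) {b : EuclideanSpace ℝ (Fin 2)}
    (hb : ∀ ω ∈ A, ‖b - W s ω‖ ≤ 2 * r) :
    ENNReal.ofReal (exp (-9 / 2) / 2 * (ε / r) ^ 2) * ℙ A ≤
      ℙ (A ∩ {ω | W (s + r ^ 2) ω ∈ Metric.ball b ε}) := by
  rw [hW.measure_inter_ball hs (lt_add_of_pos_right s (pow_pos hr 2)) hA, ← setLIntegral_const,
    add_sub_cancel_left]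
  exact setLIntegral_mono' (pastSigma_le hW.measurable s _ hA) fun ω hω =>
    le_gaussianPlane_ball hε hεr hr (hb ω hω)

/-- Started within `r` of `a`, the motion lands after time `r ^ 2` in a given ball around a point
`b` near `a`, while staying within `6 * r` of `a` at finitely many prescribed times, with
probability at least a constant times `(ε / r) ^ 2`. -/
lemma IsPlanarBM.le_measure_step (hW : IsPlanarBM W) {s r ε : ℝ} (hs : 0 ≤ s)
    (hr : 0 < r) (hε : 0 ≤ ε) (hεr : ε ≤ r)
    {A : Set Ω} (hA : MeasurableSet[pastSigma W s] A) {a b : EuclideanSpace ℝ (Fin 2)}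
    (ha : ∀ ω ∈ A, ‖W s ω - a‖ ≤ r) (hab : ‖b - a‖ ≤ r) (S : Finset ℝ) :
    ENNReal.ofReal (stepConst * (ε / r) ^ 2) * ℙ A ≤
      ℙ (A ∩ {ω | W (s + r ^ 2) ω ∈ Metric.ball b ε ∧
        ∀ t ∈ S, s ≤ t → t < s + r ^ 2 → ‖W t ω - a‖ ≤ 6 * r}) := by
  set T := S.filter fun t => s ≤ t ∧ t < s + r ^ 2 with hT
  have hTmem : ∀ t ∈ T, s ≤ t ∧ t < s + r ^ 2 := fun t ht => (Finset.mem_filter.1 ht).2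
  let F : Set Ω := {ω | W (s + r ^ 2) ω ∈ Metric.ball b ε}
  let X : ℝ → Set Ω := fun t =>
    A ∩ ({ω | ‖W t ω - a‖ ≤ 6 * r}ᶜ ∩ ⋂ u ∈ T.filter (· < t), {ω | ‖W u ω - a‖ ≤ 6 * r})
  have hXm : ∀ t ∈ T, MeasurableSet[pastSigma W t] (X t) := by
    intro t ht
    have h0 := hs.trans (hTmem t ht).1
    refine (pastSigma_mono W (hTmem t ht).1 _ hA).inter (MeasurableSet.inter ?_ ?_)
    · exact (measurableSet_norm_sub_le (measurable_pastSigma W h0 le_rfl) _ _).compl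
    · refine Finset.measurableSet_biInter _ fun u hu => ?_
      obtain ⟨huT, hut⟩ := Finset.mem_filter.1 hu
      exact measurableSet_norm_sub_le
        (measurable_pastSigma W (hs.trans (hTmem u huT).1) hut.le) _ _
  have hXm' : ∀ t ∈ T, MeasurableSet (X t) := fun t ht => pastSigma_le hW.measurable t _ (hXm t ht)
  have hdisj : (T : Set ℝ).PairwiseDisjoint X := by
    have key : ∀ t ∈ T, ∀ u, t < u → ∀ ω, ω ∈ X t → ω ∉ X u := by
      intro t ht u htu ω h1 h2
      refine h1.2.1 ?_
      have := h2.2.2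
      simp only [Set.mem_iInter] at this
      exact this t (Finset.mem_filter.2 ⟨ht, htu⟩)
    intro t ht u hu htu
    refine Set.disjoint_left.2 fun ω h1 h2 => ?_
    rcases lt_or_gt_of_ne htu with h | h
    · exact key t ht u h ω h1 h2
    · exact key u hu t h ω h2 h1
  have hleave : ∀ t ∈ T, ℙ (X t ∩ F) ≤ ENNReal.ofReal (exp (-8) / 2 * (ε / r) ^ 2) * ℙ (X t) := by
    intro t ht
    obtain ⟨h1, h2⟩ := hTmem t ht
    refine hW.measure_inter_ball_le (hs.trans h1) h2 hr (by linarith) hε hεr (hXm t ht) ?_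
    intro ω hω
    have h3 : 6 * r < ‖W t ω - a‖ := not_le.1 hω.2.1
    have h4 : ‖W t ω - a‖ ≤ ‖b - W t ω‖ + ‖b - a‖ := by
      rw [← norm_neg (b - W t ω)]
      refine (norm_add_le _ _).trans' (le_of_eq ?_)
      congr 1
      abel
    linarith
  have hsum : ℙ (⋃ t ∈ T, X t ∩ F) ≤ ENNReal.ofReal (exp (-8) / 2 * (ε / r) ^ 2) * ℙ A := by
    calc ℙ (⋃ t ∈ T, X t ∩ F) ≤ ∑ t ∈ T, ℙ (X t ∩ F) := measure_biUnion_finset_le _ _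
      _ ≤ ∑ t ∈ T, ENNReal.ofReal (exp (-8) / 2 * (ε / r) ^ 2) * ℙ (X t) :=
          Finset.sum_le_sum hleave
      _ = ENNReal.ofReal (exp (-8) / 2 * (ε / r) ^ 2) * ℙ (⋃ t ∈ T, X t) := by
          rw [← Finset.mul_sum, measure_biUnion_finset hdisj hXm']
      _ ≤ _ := by
          gcongr
          exact Set.iUnion₂_subset fun t _ => Set.inter_subset_left
  have hcover : A ∩ F ⊆ (A ∩ {ω | W (s + r ^ 2) ω ∈ Metric.ball b ε ∧
        ∀ t ∈ S, s ≤ t → t < s + r ^ 2 → ‖W t ω - a‖ ≤ 6 * r}) ∪ ⋃ t ∈ T, X t ∩ F := by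
    rintro ω ⟨hωA, hωF⟩
    by_cases h : ∀ t ∈ S, s ≤ t → t < s + r ^ 2 → ‖W t ω - a‖ ≤ 6 * r
    · exact Or.inl ⟨hωA, hωF, h⟩
    · right
      push Not at h
      obtain ⟨t, htS, h1, h2, h3⟩ := h
      obtain ⟨u, hu, hmin⟩ := Finset.exists_min_image
        (T.filter fun u => 6 * r < ‖W u ω - a‖) id
        ⟨t, Finset.mem_filter.2 ⟨Finset.mem_filter.2 ⟨htS, h1, h2⟩, h3⟩⟩
      obtain ⟨huT, hu6⟩ := Finset.mem_filter.1 hu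
      refine Set.mem_iUnion₂.2 ⟨u, huT, ⟨hωA, not_le.2 hu6, ?_⟩, hωF⟩
      simp only [Set.mem_iInter]
      intro v hv
      obtain ⟨hvT, hvu⟩ := Finset.mem_filter.1 hv
      by_contra hcon
      exact absurd (hmin v (Finset.mem_filter.2 ⟨hvT, not_le.1 hcon⟩)) (not_le.2 hvu)
  have hlow : ENNReal.ofReal (exp (-9 / 2) / 2 * (ε / r) ^ 2) * ℙ A ≤ ℙ (A ∩ F) := by
    refine hW.le_measure_inter_ball hs hr hε hεr hA fun ω hω => ?_
    have := norm_sub_le (b - a) (W s ω - a)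
    rw [sub_sub_sub_cancel_right] at this
    linarith [ha ω hω]
  have hsplit : exp (-9 / 2) / 2 * (ε / r) ^ 2 =
      stepConst * (ε / r) ^ 2 + exp (-8) / 2 * (ε / r) ^ 2 := by
    unfold stepConst; ring
  have hpos := stepConst_pos
  rw [hsplit, ENNReal.ofReal_add (by positivity) (by positivity), add_mul] at hlow
  have hfin : ENNReal.ofReal (exp (-8) / 2 * (ε / r) ^ 2) * ℙ A ≠ ⊤ :=
    ENNReal.mul_ne_top ENNReal.ofReal_ne_top (measure_ne_top _ _)
  refine (ENNReal.add_le_add_iff_right hfin).1 (hlow.trans ?_)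
  exact (measure_mono hcover).trans ((measure_union_le _ _).trans (by gcongr))

lemma IsPlanarBM.le_measure_chainEvent_step (hW : IsPlanarBM W) {r ε : ℝ} (hr : 0 < r)
    (hε : 0 ≤ ε) (hεr : ε ≤ r) (N : ℕ) {y : EuclideanSpace ℝ (Fin 2)} (hy : ‖y‖ ≤ (N + 1) * r)
    (S : Finset ℝ) (k : ℕ) :
    ENNReal.ofReal (stepConst * (ε / r) ^ 2) * ℙ (chainEvent W r N y S k) ≤
      ℙ {ω | W ((k + 1 : ℕ) * r ^ 2) ω ∈
          Metric.ball ((((k + 1 : ℕ) : ℝ) / ((N : ℝ) + 1) ^ 2) • y) ε ∧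
        ∀ t ∈ S, 0 ≤ t → t < (k + 1 : ℕ) * r ^ 2 →
          ‖W t ω - (t / (((N : ℝ) + 1) * r) ^ 2) • y‖ ≤ 7 * r} := by
  have hsucc : ((k + 1 : ℕ) : ℝ) * r ^ 2 = k * r ^ 2 + r ^ 2 := by push_cast; ring
  have hab : ‖(((k + 1 : ℕ) : ℝ) / ((N : ℝ) + 1) ^ 2) • y - ((k : ℝ) / ((N : ℝ) + 1) ^ 2) • y‖
      ≤ r := by
    have := norm_smul_sub_le_of_mem_step (t := (k + 1) * r ^ 2) (k := k) hr hy
      (by gcongr; linarith) le_rfl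
    rw [norm_sub_rev]
    have hcoef : ((k + 1 : ℕ) : ℝ) / ((N : ℝ) + 1) ^ 2 =
        (k + 1) * r ^ 2 / (((N : ℝ) + 1) * r) ^ 2 := by
      push_cast
      field_simp
    rwa [hcoef]
  refine (hW.le_measure_step (by positivity) hr hε hεr (measurableSet_chainEvent W r N y S k)
    (fun ω hω => hω.1) hab S).trans (measure_mono ?_)
  rintro ω ⟨⟨-, hpast⟩, hball, hstep⟩
  refine ⟨by rwa [hsucc], fun t ht h0 h1 => ?_⟩
  rcases lt_or_ge t (k * r ^ 2) with h | h
  · exact hpast t ht h0 h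
  · have h2 := hstep t ht h (by rwa [hsucc] at h1)
    have h3 := norm_smul_sub_le_of_mem_step hr hy h (by push_cast at h1; exact h1.le)
    have h4 := norm_sub_le_norm_sub_add_norm_sub (W t ω) (((k : ℝ) / ((N : ℝ) + 1) ^ 2) • y)
      ((t / (((N : ℝ) + 1) * r) ^ 2) • y)
    linarith

lemma IsPlanarBM.le_measure_chainEvent (hW : IsPlanarBM W) {r : ℝ} (hr : 0 < r) (N : ℕ)
    {y : EuclideanSpace ℝ (Fin 2)} (hy : ‖y‖ ≤ (N + 1) * r) (S : Finset ℝ) (k : ℕ) :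
    ENNReal.ofReal (stepConst ^ k) ≤ ℙ (chainEvent W r N y S k) := by
  induction k with
  | zero =>
    have h : ∀ᵐ ω, ω ∈ chainEvent W r N y S 0 := by
      filter_upwards [hW.init] with ω hω
      refine ⟨by simp [hω, hr.le], fun t _ h0 h1 => ?_⟩
      simp only [Nat.cast_zero, zero_mul] at h1
      exact absurd h1 (not_lt.2 h0)
    have h1 : ℙ (chainEvent W r N y S 0) = 1 :=
      (measure_congr (Filter.eventuallyEq_univ.2 h)).trans measure_univ
    simp [h1]
  | succ k ih =>
    have h := hW.le_measure_chainEvent_step hr hr.le le_rfl N hy S k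
    rw [div_self hr.ne', one_pow, mul_one] at h
    rw [pow_succ', ENNReal.ofReal_mul stepConst_pos.le]
    refine (mul_le_mul_right ih _).trans (h.trans (measure_mono ?_))
    rintro ω ⟨h1, h2⟩
    rw [Metric.mem_ball, dist_eq_norm] at h1
    exact ⟨h1.le, h2⟩

lemma IsPlanarBM.le_measure_finset (hW : IsPlanarBM W) {R γ ε : ℝ} (hR : 0 < R) {N : ℕ}
    (hN : 7 ≤ γ * (N + 1)) {y : EuclideanSpace ℝ (Fin 2)} (hy : ‖y‖ ≤ R) (hε : 0 < ε)
    (hεR : ε ≤ R) (S : Finset ℝ) :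
    ENNReal.ofReal (stepConst ^ (N + 1) ^ 2 * (ε / R) ^ 2) ≤
      ℙ {ω | W (R ^ 2) ω ∈ Metric.ball y ε ∧
        ∀ t ∈ S, 0 ≤ t → t < R ^ 2 → ‖W t ω - (t / R ^ 2) • y‖ ≤ γ * R} := by
  have hN0 : (0 : ℝ) < N + 1 := by positivity
  obtain ⟨r, hrR⟩ : ∃ r, R = (N + 1) * r := ⟨R / (N + 1), by field_simp⟩
  have hr : 0 < r := by
    rw [hrR] at hR
    exact pos_of_mul_pos_right hR hN0.le
  have hrle : r ≤ R := by
    rw [hrR]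
    exact le_mul_of_one_le_left hr.le (by linarith [N.cast_nonneg (α := ℝ)])
  obtain ⟨M, hM⟩ : ∃ M, (N + 1) ^ 2 = M + 1 := ⟨N ^ 2 + 2 * N, by ring⟩
  have hM' : ((M + 1 : ℕ) : ℝ) = ((N : ℝ) + 1) ^ 2 := by rw [← hM]; push_cast; ring
  have hmin : 0 < min ε r := lt_min hε hr
  have hmain := hW.le_measure_chainEvent_step hr hmin.le (min_le_right ε r) N
    (hrR ▸ hy) S M
  have hratio : ε / R ≤ min ε r / r := by
    rcases le_total ε r with h | h
    · rw [min_eq_left h]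
      gcongr
    · rw [min_eq_right h, div_self hr.ne']
      exact (div_le_one hR).2 hεR
  have hpos := stepConst_pos
  calc ENNReal.ofReal (stepConst ^ (N + 1) ^ 2 * (ε / R) ^ 2)
      ≤ ENNReal.ofReal (stepConst * (min ε r / r) ^ 2 * stepConst ^ M) := by
        refine ENNReal.ofReal_le_ofReal ?_
        rw [hM, pow_succ', mul_right_comm]
        gcongr
    _ = ENNReal.ofReal (stepConst * (min ε r / r) ^ 2) * ENNReal.ofReal (stepConst ^ M) :=
        ENNReal.ofReal_mul (by positivity)
    _ ≤ _ := mul_le_mul_right (hW.le_measure_chainEvent hr N (hrR ▸ hy) S M) _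
    _ ≤ _ := hmain
    _ ≤ _ := by
        refine measure_mono ?_
        rw [hM', div_self (by positivity), one_smul, ← mul_pow, ← hrR]
        rintro ω ⟨h1, h2⟩
        refine ⟨Metric.ball_subset_ball (min_le_left _ _) h1, fun t ht h3 h4 =>
          (h2 t ht h3 h4).trans ?_⟩
        rw [hrR, ← mul_assoc]
        gcongr

lemma IsPlanarBM.le_measure_tube (hW : IsPlanarBM W) {R γ ε : ℝ} (hR : 0 < R) {N : ℕ}
    (hN : 7 ≤ γ * (N + 1)) {y : EuclideanSpace ℝ (Fin 2)} (hy : ‖y‖ ≤ R) (hε : 0 < ε)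
    (hεR : ε ≤ R) :
    ENNReal.ofReal (stepConst ^ (N + 1) ^ 2 * (ε / R) ^ 2) ≤
      ℙ {ω | W (R ^ 2) ω ∈ Metric.ball y ε ∧
        ∀ t ∈ Set.Icc (0 : ℝ) (R ^ 2), ‖W t ω - (t / R ^ 2) • y‖ ≤ γ * R} := by
  let S : ℕ → Finset ℝ := fun m => (Finset.range m).image (TopologicalSpace.denseSeq ℝ)
  let G : ℕ → Set Ω := fun m => {ω | W (R ^ 2) ω ∈ Metric.ball y ε ∧
    ∀ t ∈ S m, 0 ≤ t → t < R ^ 2 → ‖W t ω - (t / R ^ 2) • y‖ ≤ γ * R}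
  have hS : Monotone S := fun m n hmn =>
    Finset.image_subset_image (Finset.range_mono hmn)
  have hG : Antitone G := fun m n hmn ω hω => ⟨hω.1, fun t ht => hω.2 t (hS hmn ht)⟩
  have hGm : ∀ m, MeasurableSet (G m) := by
    intro m
    refine MeasurableSet.inter (hW.measurable _ Metric.isOpen_ball.measurableSet) ?_
    change MeasurableSet {ω | ∀ t ∈ S m, 0 ≤ t → t < R ^ 2 → ‖W t ω - (t / R ^ 2) • y‖ ≤ γ * R}
    simp only [Set.ofPred_forall]
    exact Finset.measurableSet_biInter _ fun t _ => MeasurableSet.iInter fun _ =>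
      MeasurableSet.iInter fun _ => measurableSet_norm_sub_le (hW.measurable t) _ _
  calc _ ≤ ⨅ m, ℙ (G m) := le_iInf fun m => hW.le_measure_finset hR hN hy hε hεR (S m)
    _ = ℙ (⋂ m, G m) :=
        (hG.measure_iInter (fun m => (hGm m).nullMeasurableSet) ⟨0, measure_ne_top _ _⟩).symm
    _ ≤ _ := by
        refine measure_mono_ae ?_
        filter_upwards [hW.cont] with ω hcont hω
        have hω' : ∀ m, ω ∈ G m := Set.mem_iInter.1 hω
        refine ⟨(hω' 0).1, ?_⟩
        have hclosed : IsClosed {t : ℝ | ‖W t ω - (t / R ^ 2) • y‖ ≤ γ * R} :=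
          isClosed_le (by fun_prop) continuous_const
        have hsub : Set.Ioo (0 : ℝ) (R ^ 2) ∩ Set.range (TopologicalSpace.denseSeq ℝ) ⊆
            {t : ℝ | ‖W t ω - (t / R ^ 2) • y‖ ≤ γ * R} := by
          rintro _ ⟨ht, m, rfl⟩
          exact (hω' (m + 1)).2 _
            (Finset.mem_image_of_mem _ (Finset.self_mem_range_succ m)) ht.1.le ht.2
        have h1 := (TopologicalSpace.denseRange_denseSeq ℝ).open_subset_closure_inter
          (isOpen_Ioo (a := (0 : ℝ)) (b := R ^ 2))
        have h2 := closure_minimal (h1.trans (closure_minimal hsub hclosed)) hclosed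
        rw [closure_Ioo (pow_pos hR 2).ne] at h2
        exact h2

end BrownianMotion

theorem stmt_0 (γ : ℝ) (hγ0 : 0 < γ) (hγ1 : γ < 1) :
    ∃ c : ℝ, 0 < c ∧
      ∀ (Ω : Type) (_ : MeasureSpace Ω) (_ : IsProbabilityMeasure (ℙ : Measure Ω))
        (W : ℝ → Ω → EuclideanSpace ℝ (Fin 2)), IsPlanarBM W →
        ∀ R : ℝ, 0 < R → ∀ y : EuclideanSpace ℝ (Fin 2), ‖y‖ ≤ R →
        ∀ ε : ℝ, 0 < ε → ε ≤ γ * R / 2 →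
        ENNReal.ofReal (c * (ε / R) ^ 2) ≤
          ℙ {ω | W (R ^ 2) ω ∈ Metric.ball y ε ∧
              ∀ t ∈ Set.Icc (0 : ℝ) (R ^ 2), ‖W t ω - (t / R ^ 2) • y‖ ≤ γ * R} := by
  obtain ⟨N, hN⟩ := exists_nat_ge (7 / γ)
  refine ⟨stepConst ^ (N + 1) ^ 2, pow_pos stepConst_pos _, ?_⟩
  intro Ω _ _ W hW R hR y hy ε hε hεR
  refine hW.le_measure_tube hR ?_ hy hε (hεR.trans ?_)
  · rw [div_le_iff₀ hγ0] at hN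
    linarith
  · nlinarith
end

section
/- Fix constants 0 < λ_min ≤ λ_max and α, β, γ > 0. There exists a constant c > 0 depending only on α, β, γ such that the following holds. Let W be a standard planar Brownian motion, and let 𝓔₁ and 𝓔₂ be random variables on the same probability space such that W, 𝓔₁, 𝓔₂ are mutually independent, 𝓔₁ is exponentially distributed with rate ρ₁, and 𝓔₂ is exponentially distributed with rate ρ₂, where λ_min ≤ ρ₁ ≤ λ_max and λ_min ≤ ρ₂ ≤ λ_max. Then for every r > 0 with λ_max·r ≤ 1 and every v ∈ ℝ² with ‖v‖ ≤ (4/5)·r, the probability that simultaneously 𝓔₁ < α·r, 𝓔₂ > β·r, and ‖W_t − (t/r²)·v‖ ≤ γ·r for all t ∈ [0, r²], is at least c·r·λ_min. -/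
open MeasureTheory ProbabilityTheory Real

/-- Increments of a planar Brownian motion over consecutive non-overlapping intervals are
independent: the probability of a joint event factorizes. -/
theorem IsPlanarBM.measure_iInter_increment {Ω : Type*} [MeasureSpace Ω]
    [IsProbabilityMeasure (ℙ : Measure Ω)] {W : ℝ → Ω → EuclideanSpace ℝ (Fin 2)}
    (hW : IsPlanarBM W) {a b : ℕ → ℝ} {A : ℕ → Set (EuclideanSpace ℝ (Fin 2))}
    (ha : ∀ i, 0 ≤ a i) (hab : ∀ i, a i ≤ b i) (hba : ∀ i k, i < k → b i ≤ a k)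
    (hA : ∀ i, MeasurableSet (A i)) (n : ℕ) :
    ℙ {ω | ∀ i < n, W (b i) ω - W (a i) ω ∈ A i} =
      ∏ i ∈ Finset.range n, ℙ {ω | W (b i) ω - W (a i) ω ∈ A i} := by
  induction n with
  | zero => simp
  | succ n ih =>
    have hpast : MeasurableSet[⨆ u ∈ Set.Icc (0 : ℝ) (a n),
        MeasurableSpace.comap (W u) inferInstance]
        {ω | ∀ i < n, W (b i) ω - W (a i) ω ∈ A i} := by
      have hmeas : ∀ u ∈ Set.Icc (0 : ℝ) (a n), Measurable[⨆ u ∈ Set.Icc (0 : ℝ) (a n),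
          MeasurableSpace.comap (W u) inferInstance] (W u) := fun u hu =>
        measurable_iff_comap_le.2 <|
          le_iSup₂_of_le (f := fun u (_ : u ∈ Set.Icc (0 : ℝ) (a n)) =>
            MeasurableSpace.comap (W u) inferInstance) u hu le_rfl
      simp only [Set.ofPred_forall]
      refine MeasurableSet.iInter fun i => MeasurableSet.iInter fun hi => ?_
      have hbi := hba i n hi
      exact ((hmeas (b i) ⟨(ha i).trans (hab i), hbi⟩).sub
        (hmeas (a i) ⟨ha i, (hab i).trans hbi⟩)) (hA i)
    have hind := (Indep_iff _ _ _).1 (hW.incr_indep (a n) (b n) (ha n) (hab n))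
      {ω | W (b n) ω - W (a n) ω ∈ A n} _ ⟨A n, hA n, rfl⟩ hpast
    rw [Finset.prod_range_succ, ← ih, mul_comm, ← hind]
    congr 1
    ext ω
    simp only [Nat.forall_lt_succ_right, Set.mem_ofPred_eq, Set.mem_inter_iff, and_comm]

theorem gaussianPlane_univ {s : ℝ} (hs : 0 < s) : gaussianPlane s Set.univ = 1 := by
  have h := GaussianFourier.integral_rexp_neg_mul_sq_norm
    (V := EuclideanSpace ℝ (Fin 2)) (b := (2 * s)⁻¹) (by positivity)
  have hval : ((π / (2 * s)⁻¹) ^ ((Module.finrank ℝ (EuclideanSpace ℝ (Fin 2)) : ℝ) / 2) : ℝ)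
      = 2 * π * s := by
    simp only [finrank_euclideanSpace_fin, Nat.cast_ofNat, div_self_of_invertible, rpow_one]
    field_simp
  rw [hval] at h
  have hint : Integrable fun z : EuclideanSpace ℝ (Fin 2) => rexp (-(2 * s)⁻¹ * ‖z‖ ^ 2) := by
    by_contra hcon
    rw [integral_undef hcon] at h
    have : 0 < 2 * π * s := by positivity
    exact this.ne h
  have hfun : (fun z : EuclideanSpace ℝ (Fin 2) => ENNReal.ofReal
      ((2 * π * s)⁻¹ * rexp (-‖z‖ ^ 2 / (2 * s)))) =
      fun z => ENNReal.ofReal ((2 * π * s)⁻¹ * rexp (-(2 * s)⁻¹ * ‖z‖ ^ 2)) := by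
    funext z
    congr 3
    ring
  rw [gaussianPlane, withDensity_apply _ MeasurableSet.univ, Measure.restrict_univ, hfun,
    ← ofReal_integral_eq_lintegral_ofReal (hint.const_mul _)
      (Filter.Eventually.of_forall fun z => by positivity), integral_const_mul, h,
    inv_mul_cancel₀ (by positivity), ENNReal.ofReal_one]

/-- A Gaussian tail estimate on the plane. -/
theorem gaussianPlane_norm_gt_le {s a : ℝ} (hs : 0 < s) (ha : 0 < a) :
    gaussianPlane s {z | a < ‖z‖} ≤ ENNReal.ofReal (12 * (4 * s / a ^ 2) ^ 3) := by
  have hset : MeasurableSet {z : EuclideanSpace ℝ (Fin 2) | a < ‖z‖} :=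
    measurableSet_lt measurable_const measurable_norm
  set C : ℝ := 2 * rexp (-(a ^ 2 / (4 * s))) with hC
  have hle : gaussianPlane s {z | a < ‖z‖} ≤ ENNReal.ofReal C := by
    calc gaussianPlane s {z | a < ‖z‖}
        ≤ ∫⁻ z in {z : EuclideanSpace ℝ (Fin 2) | a < ‖z‖}, ENNReal.ofReal C *
            ENNReal.ofReal ((2 * π * (2 * s))⁻¹ * rexp (-‖z‖ ^ 2 / (2 * (2 * s)))) := by
          rw [gaussianPlane, withDensity_apply _ hset]
          refine setLIntegral_mono' hset fun z (hz : a < ‖z‖) => ?_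
          rw [← ENNReal.ofReal_mul (by positivity)]
          refine ENNReal.ofReal_le_ofReal ?_
          have hexp : rexp (-‖z‖ ^ 2 / (2 * s)) ≤
              rexp (-(a ^ 2 / (4 * s))) * rexp (-‖z‖ ^ 2 / (2 * (2 * s))) := by
            rw [← Real.exp_add]
            refine Real.exp_le_exp.2 ?_
            have : a ^ 2 ≤ ‖z‖ ^ 2 := by gcongr
            have h2 : a ^ 2 / (4 * s) ≤ ‖z‖ ^ 2 / (4 * s) := by gcongr
            calc -‖z‖ ^ 2 / (2 * s) = -(‖z‖ ^ 2 / (4 * s)) + -‖z‖ ^ 2 / (2 * (2 * s)) := by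
                  field_simp
                  ring
              _ ≤ _ := by linarith
          calc (2 * π * s)⁻¹ * rexp (-‖z‖ ^ 2 / (2 * s))
              ≤ (2 * π * s)⁻¹ * (rexp (-(a ^ 2 / (4 * s))) *
                  rexp (-‖z‖ ^ 2 / (2 * (2 * s)))) := by gcongr
            _ = _ := by
                rw [hC]
                field_simp
      _ ≤ ∫⁻ z : EuclideanSpace ℝ (Fin 2), ENNReal.ofReal C *
            ENNReal.ofReal ((2 * π * (2 * s))⁻¹ * rexp (-‖z‖ ^ 2 / (2 * (2 * s)))) :=
          setLIntegral_le_lintegral _ _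
      _ = ENNReal.ofReal C * gaussianPlane (2 * s) Set.univ := by
          rw [lintegral_const_mul' _ _ ENNReal.ofReal_ne_top, gaussianPlane,
            withDensity_apply _ MeasurableSet.univ, Measure.restrict_univ]
      _ = ENNReal.ofReal C := by rw [gaussianPlane_univ (by positivity), mul_one]
  refine hle.trans (ENNReal.ofReal_le_ofReal ?_)
  have hx : 0 < a ^ 2 / (4 * s) := by positivity
  have hcube := Real.pow_div_factorial_le_exp (a ^ 2 / (4 * s)) hx.le 3
  have hinv : 4 * s / a ^ 2 = (a ^ 2 / (4 * s))⁻¹ := by rw [inv_div]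
  rw [hC, Real.exp_neg, hinv]
  calc 2 * (rexp (a ^ 2 / (4 * s)))⁻¹
      ≤ 2 * ((a ^ 2 / (4 * s)) ^ 3 / (Nat.factorial 3 : ℝ))⁻¹ := by gcongr
    _ = _ := by
        norm_num [Nat.factorial]
        field_simp
        norm_num

/-- A lower bound for the mass that a planar Gaussian gives to a disc, in terms of the distance
from the origin to the farthest point of the disc. -/
theorem le_gaussianPlane_closedBall {s R ρ : ℝ} (hs : 0 < s) (hρ : 0 ≤ ρ)
    {x : EuclideanSpace ℝ (Fin 2)} (hR : ‖x‖ + ρ ≤ R) :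
    ENNReal.ofReal (rexp (-R ^ 2 / (2 * s)) * ρ ^ 2 / (2 * s)) ≤
      gaussianPlane s (Metric.closedBall x ρ) := by
  rw [gaussianPlane, withDensity_apply _ Metric.isClosed_closedBall.measurableSet]
  calc ENNReal.ofReal (rexp (-R ^ 2 / (2 * s)) * ρ ^ 2 / (2 * s))
      = ENNReal.ofReal ((2 * π * s)⁻¹ * rexp (-R ^ 2 / (2 * s))) *
          volume (Metric.closedBall x ρ) := by
        rw [EuclideanSpace.volume_closedBall_fin_two, ← ENNReal.ofReal_pow hρ,
          ← ENNReal.ofReal_mul (by positivity), ← ENNReal.ofReal_mul (by positivity)]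
        congr 1
        field_simp
    _ = ∫⁻ _ in Metric.closedBall x ρ,
          ENNReal.ofReal ((2 * π * s)⁻¹ * rexp (-R ^ 2 / (2 * s))) := by
        rw [setLIntegral_const]
    _ ≤ _ := by
        refine setLIntegral_mono' Metric.isClosed_closedBall.measurableSet fun z hz => ?_
        have hz' : ‖z‖ ≤ R := by
          have h1 : ‖z - x‖ ≤ ρ := by simpa [dist_eq_norm] using hz
          have h2 : ‖z‖ ≤ ‖z - x‖ + ‖x‖ := by simpa using norm_add_le (z - x) x
          linarith
        gcongr

/-- Dyadic chaining at a fixed level: increments over dyadic intervals of length `2 ^ (-m)`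
bounded by `a m` control the function at dyadic points. -/
theorem norm_sub_le_sum_of_dyadic {E : Type*} [SeminormedAddCommGroup E] {f : ℝ → E} {a : ℕ → ℝ}
    (ha : ∀ m, 0 ≤ a m)
    (hf : ∀ m k : ℕ, k < 2 ^ m → ‖f ((k + 1 : ℕ) / 2 ^ m) - f (k / 2 ^ m)‖ ≤ a m)
    (m k : ℕ) (hk : k ≤ 2 ^ m) :
    ‖f (k / 2 ^ m) - f 0‖ ≤ ∑ i ∈ Finset.range (m + 1), a i := by
  induction m generalizing k with
  | zero =>
    have hk' : k = 0 ∨ k = 1 := by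
      rw [pow_zero] at hk
      omega
    rcases hk' with rfl | rfl
    · simpa using ha 0
    · simpa using hf 0 0 (by simp)
  | succ m ih =>
    have hpow : 2 ^ (m + 1) = 2 * 2 ^ m := by ring
    have heven : ∀ l : ℕ, ((2 * l : ℕ) : ℝ) / 2 ^ (m + 1) = (l : ℝ) / 2 ^ m := fun l => by
      push_cast
      field_simp
      ring
    rw [Finset.sum_range_succ]
    rcases Nat.even_or_odd' k with ⟨l, rfl | rfl⟩
    · rw [heven]
      linarith [ih l (by omega), ha (m + 1)]
    · have h1 := hf (m + 1) (2 * l) (by omega)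
      have h2 := ih l (by omega)
      rw [heven] at h1
      have h3 := norm_sub_le_norm_sub_add_norm_sub (f ((2 * l + 1 : ℕ) / 2 ^ (m + 1)))
        (f (l / 2 ^ m)) (f 0)
      linarith

/-- Dyadic chaining for a continuous function on the unit interval. -/
theorem norm_sub_le_of_dyadic {E : Type*} [SeminormedAddCommGroup E] {f : ℝ → E} {a : ℕ → ℝ}
    {S : ℝ} (hcont : Continuous f) (ha : ∀ m, 0 ≤ a m)
    (hS : ∀ m, ∑ i ∈ Finset.range m, a i ≤ S)
    (hf : ∀ m k : ℕ, k < 2 ^ m → ‖f ((k + 1 : ℕ) / 2 ^ m) - f (k / 2 ^ m)‖ ≤ a m)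
    {t : ℝ} (ht : t ∈ Set.Icc (0 : ℝ) 1) : ‖f t - f 0‖ ≤ S := by
  have hlim : Filter.Tendsto (fun m : ℕ => (⌊t * 2 ^ m⌋₊ : ℝ) / 2 ^ m) Filter.atTop (nhds t) :=
    (tendsto_nat_floor_mul_div_atTop ht.1).comp
      (tendsto_pow_atTop_atTop_of_one_lt (one_lt_two (α := ℝ)))
  refine le_of_tendsto' (((hcont.tendsto t).comp hlim).sub_const (f 0)).norm fun m => ?_
  refine (norm_sub_le_sum_of_dyadic ha hf m _ ?_).trans (hS _)
  refine Nat.floor_le_of_le ?_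
  push_cast
  have : (0 : ℝ) < 2 ^ m := by positivity
  nlinarith [ht.2]

section Grid

variable {Ω : Type*} [MeasureSpace Ω] {W : ℝ → Ω → EuclideanSpace ℝ (Fin 2)}

theorem IsPlanarBM.measure_increment_mem (hW : IsPlanarBM W) {s t : ℝ} (hs : 0 ≤ s) (hst : s < t)
    {A : Set (EuclideanSpace ℝ (Fin 2))} (hA : MeasurableSet A) :
    ℙ {ω | W t ω - W s ω ∈ A} = gaussianPlane (t - s) A := by
  rw [← hW.incr_law s t hs hst]
  exact (Measure.map_apply ((hW.measurable t).sub (hW.measurable s)) hA).symm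

variable [IsProbabilityMeasure (ℙ : Measure Ω)]

theorem IsPlanarBM.measure_grid (hW : IsPlanarBM W) {δ : ℝ} (hδ : 0 < δ)
    {A : Set (EuclideanSpace ℝ (Fin 2))} (hA : MeasurableSet A) (n : ℕ) :
    ℙ {ω | ∀ i < n, W (δ * (i + 1)) ω - W (δ * i) ω ∈ A} = gaussianPlane δ A ^ n := by
  rw [hW.measure_iInter_increment (a := fun i => δ * i) (b := fun i => δ * (i + 1))
    (A := fun _ => A) (fun i => by positivity) (fun i => by nlinarith) ?_ (fun _ => hA) n]
  · have h : ∀ i : ℕ, ℙ {ω | W (δ * (i + 1)) ω - W (δ * i) ω ∈ A} = gaussianPlane δ A :=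
      fun i => by
        rw [hW.measure_increment_mem (by positivity) (by nlinarith) hA]
        congr 1
        ring_nf
    simp [h]
  · intro i k hik
    have : (i : ℝ) + 1 ≤ k := by exact_mod_cast hik
    exact mul_le_mul_of_nonneg_left this hδ.le

/-- The joint probability of a grid event and of an event on an increment inside the `j`-th cell,
bounded by dropping the constraint on the `j`-th cell. -/
theorem IsPlanarBM.measure_grid_inter_le (hW : IsPlanarBM W) {δ : ℝ} (hδ : 0 < δ)
    {A B : Set (EuclideanSpace ℝ (Fin 2))} (hA : MeasurableSet A) (hB : MeasurableSet B)
    {n j : ℕ} (hj : j < n) {x y : ℝ} (hx : 0 ≤ x) (hxy : x < y) (hy : y ≤ 1) :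
    ℙ ({ω | ∀ i < n, W (δ * (i + 1)) ω - W (δ * i) ω ∈ A} ∩
        {ω | W (δ * (j + y)) ω - W (δ * (j + x)) ω ∈ B}) ≤
      gaussianPlane δ A ^ (n - 1) * gaussianPlane (δ * (y - x)) B := by
  classical
  set a : ℕ → ℝ := fun i => δ * (i + if i = j then x else 0) with ha
  set b : ℕ → ℝ := fun i => δ * (i + if i = j then y else 1) with hb
  set D : ℕ → Set (EuclideanSpace ℝ (Fin 2)) := fun i => if i = j then B else A with hD
  have hDm : ∀ i, MeasurableSet (D i) := fun i => by
    simp only [hD]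
    split_ifs <;> assumption
  have ha0 : ∀ i, 0 ≤ a i := fun i => by
    simp only [ha]
    split_ifs <;> positivity
  have hab : ∀ i, a i < b i := fun i => by
    simp only [ha, hb]
    refine mul_lt_mul_of_pos_left ?_ hδ
    split_ifs <;> linarith
  have hba : ∀ i k, i < k → b i ≤ a k := fun i k hik => by
    simp only [ha, hb]
    refine mul_le_mul_of_nonneg_left ?_ hδ.le
    have : (i : ℝ) + 1 ≤ k := by exact_mod_cast hik
    split_ifs <;> linarith
  have hprod := hW.measure_iInter_increment ha0 (fun i => (hab i).le) hba hDm n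
  have hfactor : ∀ i, ℙ {ω | W (b i) ω - W (a i) ω ∈ D i} =
      Function.update (fun _ => gaussianPlane δ A) j (gaussianPlane (δ * (y - x)) B) i := by
    intro i
    rw [hW.measure_increment_mem (ha0 i) (hab i) (hDm i)]
    by_cases hij : i = j
    · subst hij
      simp only [ha, hb, hD, if_true, Function.update_self]
      congr 1
      ring_nf
    · simp only [ha, hb, hD, if_neg hij, Function.update_of_ne hij]
      congr 1
      ring_nf
  have hval : ∏ i ∈ Finset.range n, ℙ {ω | W (b i) ω - W (a i) ω ∈ D i} =
      gaussianPlane δ A ^ (n - 1) * gaussianPlane (δ * (y - x)) B := by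
    simp only [hfactor]
    rw [Finset.prod_update_of_mem (Finset.mem_range.2 hj), Finset.prod_const,
      Finset.card_sdiff_of_subset (by simpa using hj), Finset.card_range, Finset.card_singleton,
      mul_comm]
  rw [← hval, ← hprod]
  refine measure_mono fun ω hω i hi => ?_
  by_cases hij : i = j
  · subst hij
    simpa [ha, hb, hD] using hω.2
  · simpa [ha, hb, hD, hij] using hω.1 i hi

/-- Geometric summation of the tail estimates over all dyadic levels. -/
theorem tsum_dyadic_gaussianPlane_le {δ b : ℝ} (hδ : 0 < δ) (hb : 0 < b) :
    ∑' m : ℕ, (2 : ENNReal) ^ m * gaussianPlane (δ * (1 / 2 ^ m)) {z | b * (7 / 8) ^ m < ‖z‖} ≤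
      ENNReal.ofReal (28 * (4 * δ / b ^ 2) ^ 3) := by
  have hterm : ∀ m : ℕ,
      (2 : ENNReal) ^ m * gaussianPlane (δ * (1 / 2 ^ m)) {z | b * (7 / 8) ^ m < ‖z‖} ≤
        ENNReal.ofReal (12 * (4 * δ / b ^ 2) ^ 3 * (4 / 7) ^ m) := by
    intro m
    have h2 : (2 : ENNReal) ^ m = ENNReal.ofReal (2 ^ m) := by
      rw [ENNReal.ofReal_pow (by norm_num)]
      norm_num
    refine (mul_le_mul_right
      (gaussianPlane_norm_gt_le (by positivity) (by positivity)) _).trans ?_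
    rw [h2, ← ENNReal.ofReal_mul (by positivity)]
    refine ENNReal.ofReal_le_ofReal ?_
    calc (2 : ℝ) ^ m * (12 * (4 * (δ * (1 / 2 ^ m)) / (b * (7 / 8) ^ m) ^ 2) ^ 3)
        = 12 * (4 * δ / b ^ 2) ^ 3 * (2 * (1 / 2) ^ 3 * (8 / 7) ^ 6) ^ m := by
          simp only [mul_pow, div_pow, one_pow, ← pow_mul]
          field_simp
          ring
      _ ≤ 12 * (4 * δ / b ^ 2) ^ 3 * (4 / 7) ^ m := by
          gcongr
          norm_num
  refine (ENNReal.tsum_le_tsum hterm).trans ?_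
  have hgeom : Summable fun m : ℕ => (4 / 7 : ℝ) ^ m :=
    summable_geometric_of_lt_one (by norm_num) (by norm_num)
  rw [← ENNReal.ofReal_tsum_of_nonneg (fun m => by positivity) (hgeom.mul_left _), tsum_mul_left,
    tsum_geometric_of_lt_one (by norm_num) (by norm_num)]
  refine ENNReal.ofReal_le_ofReal (le_of_eq ?_)
  ring

/-- If the increments over the grid cells fall in `A` with a probability that dominates the
chance of a large oscillation, then with comparable probability all the grid increments fall in `A`
and no dyadic increment inside a cell is large. -/
theorem IsPlanarBM.le_measure_grid_chain (hW : IsPlanarBM W) {δ b : ℝ} (hδ : 0 < δ) (hb : 0 < b)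
    {A : Set (EuclideanSpace ℝ (Fin 2))} (hA : MeasurableSet A) {n : ℕ} (hn : 0 < n)
    (hlarge : n * ENNReal.ofReal (28 * (4 * δ / b ^ 2) ^ 3) ≤ gaussianPlane δ A / 2) :
    gaussianPlane δ A ^ n / 2 ≤ ℙ {ω | ∀ j < n, W (δ * (j + 1)) ω - W (δ * j) ω ∈ A ∧
      ∀ m k : ℕ, k < 2 ^ m → ‖W (δ * (j + (k + 1 : ℕ) / 2 ^ m)) ω - W (δ * (j + k / 2 ^ m)) ω‖ ≤
        b * (7 / 8) ^ m} := by
  set h := gaussianPlane δ A with hh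
  set G := {ω | ∀ j < n, W (δ * (j + 1)) ω - W (δ * j) ω ∈ A ∧
      ∀ m k : ℕ, k < 2 ^ m → ‖W (δ * (j + (k + 1 : ℕ) / 2 ^ m)) ω - W (δ * (j + k / 2 ^ m)) ω‖ ≤
        b * (7 / 8) ^ m} with hG
  set H := {ω | ∀ i < n, W (δ * (i + 1)) ω - W (δ * i) ω ∈ A} with hH
  set F : ℕ → ℕ → ℕ → Set Ω := fun j m k =>
    H ∩ {ω | W (δ * (j + (k + 1 : ℕ) / 2 ^ m)) ω - W (δ * (j + k / 2 ^ m)) ω ∈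
      {z | b * (7 / 8) ^ m < ‖z‖}} with hF
  have hF_le : ∀ j < n, ∀ m, ∀ k < 2 ^ m, ℙ (F j m k) ≤
      h ^ (n - 1) * gaussianPlane (δ * (1 / 2 ^ m)) {z | b * (7 / 8) ^ m < ‖z‖} := by
    intro j hj m k hk
    have hlen : (1 : ℝ) / 2 ^ m = ((k + 1 : ℕ) : ℝ) / 2 ^ m - k / 2 ^ m := by
      push_cast
      ring
    rw [hlen]
    refine hW.measure_grid_inter_le hδ hA (measurableSet_lt measurable_const measurable_norm) hj
      (by positivity) ?_ ?_
    · gcongr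
      exact Nat.lt_succ_self k
    · rw [div_le_one (by positivity)]
      exact_mod_cast hk
  have hcover : H ⊆ G ∪ ⋃ j ∈ Finset.range n, ⋃ m, ⋃ k ∈ Finset.range (2 ^ m), F j m k := by
    intro ω hω
    by_cases hgood : ω ∈ G
    · exact Or.inl hgood
    · right
      simp only [hG, Set.mem_ofPred_eq] at hgood
      push Not at hgood
      obtain ⟨j, hj, hbad⟩ := hgood
      obtain ⟨m, k, hk, hgt⟩ := hbad (hω j hj)
      simp only [Set.mem_iUnion, Finset.mem_range]
      exact ⟨j, hj, m, k, hk, hω, hgt⟩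
  have hbad : ℙ (⋃ j ∈ Finset.range n, ⋃ m, ⋃ k ∈ Finset.range (2 ^ m), F j m k) ≤ h ^ n / 2 := by
    calc ℙ (⋃ j ∈ Finset.range n, ⋃ m, ⋃ k ∈ Finset.range (2 ^ m), F j m k)
        ≤ ∑ j ∈ Finset.range n, ∑' m, ∑ k ∈ Finset.range (2 ^ m), ℙ (F j m k) :=
          (measure_biUnion_finset_le _ _).trans <| Finset.sum_le_sum fun j _ =>
            (measure_iUnion_le _).trans <| ENNReal.tsum_le_tsum fun m =>
              measure_biUnion_finset_le _ _
      _ ≤ ∑ j ∈ Finset.range n, ∑' m : ℕ, ∑ k ∈ Finset.range (2 ^ m),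
            h ^ (n - 1) * gaussianPlane (δ * (1 / 2 ^ m)) {z | b * (7 / 8) ^ m < ‖z‖} :=
          Finset.sum_le_sum fun j hj => ENNReal.tsum_le_tsum fun m =>
            Finset.sum_le_sum fun k hk =>
              hF_le j (Finset.mem_range.1 hj) m k (Finset.mem_range.1 hk)
      _ = n * (h ^ (n - 1) * ∑' m : ℕ, 2 ^ m *
            gaussianPlane (δ * (1 / 2 ^ m)) {z | b * (7 / 8) ^ m < ‖z‖}) := by
          simp only [Finset.sum_const, Finset.card_range, nsmul_eq_mul, Nat.cast_pow,
            Nat.cast_ofNat, ← ENNReal.tsum_mul_left]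
          congr 2
          funext m
          ring
      _ ≤ n * (h ^ (n - 1) * ENNReal.ofReal (28 * (4 * δ / b ^ 2) ^ 3)) := by
          gcongr
          exact tsum_dyadic_gaussianPlane_le hδ hb
      _ = h ^ (n - 1) * (n * ENNReal.ofReal (28 * (4 * δ / b ^ 2) ^ 3)) := by ring
      _ ≤ h ^ (n - 1) * (h / 2) := by gcongr
      _ = h ^ n / 2 := by
          rw [← mul_div_assoc, ← pow_succ, Nat.sub_add_cancel hn]
  have hfin : h ^ n / 2 ≠ ⊤ := by
    have h1 : h ≤ 1 := (measure_mono (Set.subset_univ A)).trans (gaussianPlane_univ hδ).le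
    exact ENNReal.div_ne_top (ENNReal.pow_ne_top (h1.trans_lt ENNReal.one_lt_top).ne) two_ne_zero
  have htotal : h ^ n ≤ ℙ G + h ^ n / 2 := by
    calc h ^ n = ℙ H := (hW.measure_grid hδ hA n).symm
      _ ≤ _ := measure_mono hcover
      _ ≤ _ := measure_union_le _ _
      _ ≤ _ := by gcongr
  rw [← ENNReal.add_halves (h ^ n)] at htotal
  exact (ENNReal.add_le_add_iff_right hfin).1 (by simpa using htotal)

end Grid

/-- A continuous path whose grid increments are close to `u` and whose dyadic increments inside each
grid cell are small stays close to the linear path with slope `u / δ`. -/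
theorem norm_sub_smul_le_of_grid_chain {E : Type*} [SeminormedAddCommGroup E] [NormedSpace ℝ E]
    {f : ℝ → E} (hf : Continuous f) (hf0 : f 0 = 0) {δ b ρ : ℝ} (hδ : 0 < δ) (hb : 0 ≤ b)
    (hρ : 0 ≤ ρ) {u : E} {n : ℕ} (hn : 0 < n)
    (hgrid : ∀ j < n, f (δ * (j + 1)) - f (δ * j) ∈ Metric.closedBall u ρ)
    (hchain : ∀ j < n, ∀ m k : ℕ, k < 2 ^ m →
      ‖f (δ * (j + (k + 1 : ℕ) / 2 ^ m)) - f (δ * (j + k / 2 ^ m))‖ ≤ b * (7 / 8) ^ m)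
    {t : ℝ} (ht : t ∈ Set.Icc 0 (δ * n)) : ‖f t - (t / δ) • u‖ ≤ n * ρ + 8 * b + ‖u‖ := by
  have hpt : ∀ j ≤ n, ‖f (δ * j) - (j : ℝ) • u‖ ≤ j * ρ := by
    intro j
    induction j with
    | zero => simp [hf0]
    | succ j ih =>
      intro hj
      have h1 : ‖f (δ * (j + 1)) - f (δ * j) - u‖ ≤ ρ := by
        simpa [dist_eq_norm] using hgrid j hj
      have h2 := ih (by omega)
      have h3 : f (δ * (j + 1 : ℕ)) - ((j + 1 : ℕ) : ℝ) • u =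
          (f (δ * (j + 1)) - f (δ * j) - u) + (f (δ * j) - (j : ℝ) • u) := by
        push_cast
        rw [add_smul, one_smul]
        abel
      rw [h3]
      refine (norm_add_le _ _).trans ?_
      push_cast
      linarith
  obtain ⟨j, hj, x, hx, rfl⟩ : ∃ j < n, ∃ x ∈ Set.Icc (0 : ℝ) 1, t = δ * (j + x) := by
    have ht0 : 0 ≤ t / δ := div_nonneg ht.1 hδ.le
    rcases ht.2.lt_or_eq with hlt | heq
    · have hlt' : t / δ < n := by
        rw [div_lt_iff₀ hδ]
        linarith
      refine ⟨⌊t / δ⌋₊, (Nat.floor_lt ht0).2 hlt', t / δ - ⌊t / δ⌋₊, ⟨?_, ?_⟩, ?_⟩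
      · linarith [Nat.floor_le ht0]
      · linarith [Nat.lt_floor_add_one (t / δ)]
      · field_simp
        ring
    · refine ⟨n - 1, by omega, 1, by simp, ?_⟩
      rw [heq, Nat.cast_sub hn]
      push_cast
      ring
  have hsum : ∀ m : ℕ, ∑ i ∈ Finset.range m, b * (7 / 8 : ℝ) ^ i ≤ 8 * b := by
    intro m
    rw [← Finset.mul_sum, geom_sum_eq (by norm_num), mul_comm 8 b]
    refine mul_le_mul_of_nonneg_left ?_ hb
    have : (0 : ℝ) ≤ (7 / 8) ^ m := by positivity
    rw [div_le_iff_of_neg (by norm_num)]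
    linarith
  have hosc : ‖f (δ * (j + x)) - f (δ * j)‖ ≤ 8 * b := by
    have := norm_sub_le_of_dyadic (f := fun y => f (δ * (j + y))) (by fun_prop)
      (fun m => by positivity) hsum (hchain j hj) hx
    simpa using this
  have hgridpt := hpt j hj.le
  have hxu : ‖x • u‖ ≤ ‖u‖ := by
    rw [norm_smul, Real.norm_of_nonneg hx.1]
    exact mul_le_of_le_one_left (norm_nonneg u) hx.2
  have hjn : (j : ℝ) * ρ ≤ n * ρ := by gcongr
  have hsplit : f (δ * (j + x)) - (δ * (j + x) / δ) • u =
      (f (δ * (j + x)) - f (δ * j)) + (f (δ * j) - (j : ℝ) • u) - x • u := by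
    rw [mul_div_cancel_left₀ _ hδ.ne', add_smul]
    abel
  rw [hsplit]
  linarith [norm_sub_le ((f (δ * (j + x)) - f (δ * j)) + (f (δ * j) - (j : ℝ) • u)) (x • u),
    norm_add_le (f (δ * (j + x)) - f (δ * j)) (f (δ * j) - (j : ℝ) • u)]

/-- On a space-time scale `r`, planar Brownian motion follows a segment of slope of order `1 / r`
up to an error `γ * r` with a probability bounded below uniformly in `r`. -/
theorem exists_le_measure_brownian_tube {γ : ℝ} (hγ : 0 < γ) :
    ∃ c : ℝ, 0 < c ∧ ∀ (Ω : Type) (_ : MeasureSpace Ω) (_ : IsProbabilityMeasure (ℙ : Measure Ω))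
      (W : ℝ → Ω → EuclideanSpace ℝ (Fin 2)), IsPlanarBM W →
      ∀ r : ℝ, 0 < r → ∀ v : EuclideanSpace ℝ (Fin 2), ‖v‖ ≤ 4 / 5 * r →
      ∃ G : Set Ω, MeasurableSet[⨆ t : ℝ, MeasurableSpace.comap (W t) inferInstance] G ∧
        ENNReal.ofReal c ≤ ℙ G ∧ ∀ᵐ ω : Ω, ω ∈ G →
          ∀ t ∈ Set.Icc (0 : ℝ) (r ^ 2), ‖W t ω - (t / r ^ 2) • v‖ ≤ γ * r := by
  set K : ℝ := (4 / 5 + γ / 2) ^ 2 / 2 with hK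
  obtain ⟨n, hn⟩ := exists_nat_ge (4 / γ + 448 * 4096 ^ 3 * rexp K / γ ^ 8)
  have hn_drift : 4 / γ ≤ n := le_trans (le_add_of_nonneg_right (by positivity)) hn
  have hn_tail : 448 * 4096 ^ 3 * rexp K / γ ^ 8 ≤ n :=
    le_trans (le_add_of_nonneg_left (by positivity)) hn
  have hn0 : (0 : ℝ) < n := lt_of_lt_of_le (by positivity) hn_drift
  have hn1 : (1 : ℝ) ≤ n := by exact_mod_cast (Nat.cast_pos.1 hn0 : 0 < n)
  set q : ℝ := rexp (-K) * γ ^ 2 / (8 * n) with hq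
  have hq0 : 0 < q := by positivity
  refine ⟨q ^ n / 2, by positivity, ?_⟩
  intro Ω _ _ W hW r hr v hv
  set δ : ℝ := r ^ 2 / n with hδ
  set ρ : ℝ := γ * r / (2 * n) with hρ
  set b : ℝ := γ * r / 32 with hb
  set u : EuclideanSpace ℝ (Fin 2) := (1 / n : ℝ) • v with hu
  have hδ0 : 0 < δ := by positivity
  have hu_norm : ‖u‖ ≤ 4 / 5 * r / n := by
    rw [hu, norm_smul, Real.norm_of_nonneg (by positivity), one_div, ← div_eq_inv_mul]
    gcongr
  have hball : ENNReal.ofReal q ≤ gaussianPlane δ (Metric.closedBall u ρ) := by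
    have hR : ‖u‖ + ρ ≤ (4 / 5 + γ / 2) * r / n := by
      calc ‖u‖ + ρ ≤ 4 / 5 * r / n + ρ := by gcongr
        _ = _ := by
          rw [hρ]
          field_simp
    refine le_trans (ENNReal.ofReal_le_ofReal ?_)
      (le_gaussianPlane_closedBall hδ0 (by positivity : 0 ≤ ρ) hR)
    have hcoef : ρ ^ 2 / (2 * δ) = γ ^ 2 / (8 * n) := by
      rw [hρ, hδ]
      field_simp
      norm_num
    have hexp : -K ≤ -((4 / 5 + γ / 2) * r / n) ^ 2 / (2 * δ) := by
      have : -((4 / 5 + γ / 2) * r / n) ^ 2 / (2 * δ) = -(K / n) := by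
        rw [hK, hδ]
        field_simp
      rw [this]
      exact neg_le_neg (div_le_self (by positivity) hn1)
    rw [hq, mul_div_assoc, mul_div_assoc, hcoef]
    gcongr
  have hlarge : n * ENNReal.ofReal (28 * (4 * δ / b ^ 2) ^ 3) ≤
      gaussianPlane δ (Metric.closedBall u ρ) / 2 := by
    have hreal : n * (28 * (4 * δ / b ^ 2) ^ 3) ≤ q / 2 := by
      have h1 : n * (28 * (4 * δ / b ^ 2) ^ 3) =
          448 * 4096 ^ 3 * rexp K / γ ^ 8 * (rexp (-K) * γ ^ 2 / (16 * n ^ 2)) := by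
        rw [Real.exp_neg, hδ, hb]
        field_simp
        norm_num
      have h2 : q / 2 = n * (rexp (-K) * γ ^ 2 / (16 * n ^ 2)) := by
        rw [hq]
        field_simp
        norm_num
      rw [h1, h2]
      gcongr
    calc n * ENNReal.ofReal (28 * (4 * δ / b ^ 2) ^ 3)
        = ENNReal.ofReal (n * (28 * (4 * δ / b ^ 2) ^ 3)) := by
          rw [ENNReal.ofReal_mul hn0.le, ENNReal.ofReal_natCast]
      _ ≤ ENNReal.ofReal (q / 2) := ENNReal.ofReal_le_ofReal hreal
      _ = ENNReal.ofReal q / 2 := by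
          rw [ENNReal.ofReal_div_of_pos two_pos, ENNReal.ofReal_ofNat]
      _ ≤ _ := by gcongr
  refine ⟨_, ?_, le_trans ?_ (hW.le_measure_grid_chain hδ0 (by positivity : 0 < b)
    Metric.isClosed_closedBall.measurableSet (Nat.cast_pos.1 hn0) hlarge), ?_⟩
  · have hmeas : ∀ t, Measurable[⨆ t : ℝ, MeasurableSpace.comap (W t) inferInstance] (W t) :=
      fun t => measurable_iff_comap_le.2 <|
        le_iSup (fun t => MeasurableSpace.comap (W t) inferInstance) t
    simp only [Set.ofPred_forall, Set.ofPred_and]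
    refine MeasurableSet.iInter fun j => MeasurableSet.iInter fun _ => MeasurableSet.inter ?_ ?_
    · exact ((hmeas _).sub (hmeas _)) Metric.isClosed_closedBall.measurableSet
    · refine MeasurableSet.iInter fun m => MeasurableSet.iInter fun k =>
        MeasurableSet.iInter fun _ => ?_
      exact ((hmeas _).sub (hmeas _)) (measurableSet_le measurable_norm measurable_const :
        MeasurableSet {z : EuclideanSpace ℝ (Fin 2) | ‖z‖ ≤ b * (7 / 8) ^ m})
  · rw [ENNReal.ofReal_div_of_pos two_pos, ENNReal.ofReal_ofNat, ENNReal.ofReal_pow hq0.le]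
    gcongr
  · filter_upwards [hW.init, hW.cont] with ω hinit hcont hω t ht
    have hδn : δ * n = r ^ 2 := by
      rw [hδ]
      field_simp
    have htube := norm_sub_smul_le_of_grid_chain hcont hinit hδ0 (by positivity : 0 ≤ b)
      (by positivity : 0 ≤ ρ) (Nat.cast_pos.1 hn0) (fun j hj => (hω j hj).1)
      (fun j hj => (hω j hj).2) (hδn ▸ ht)
    have hslope : (t / δ) • u = (t / r ^ 2) • v := by
      rw [hu, hδ, smul_smul]
      congr 1
      field_simp
    rw [hslope] at htube
    refine htube.trans ?_
    have hdrift : 4 / 5 * r / n ≤ γ * r / 4 := by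
      rw [div_le_iff₀ hγ] at hn_drift
      rw [div_le_iff₀ hn0]
      nlinarith
    have h1 : n * ρ = γ * r / 2 := by
      rw [hρ]
      field_simp
    rw [h1, hb]
    linarith

theorem expMeasure_Iic {ρ : ℝ} (hρ : 0 < ρ) {x : ℝ} (hx : 0 ≤ x) :
    expMeasure ρ (Set.Iic x) = ENNReal.ofReal (1 - rexp (-(ρ * x))) := by
  have := isProbabilityMeasure_expMeasure hρ
  rw [← ofReal_cdf, cdf_expMeasure_eq hρ, if_pos hx]

theorem le_expMeasure_Iio {ρ x : ℝ} (hρ : 0 < ρ) (hx : 0 < x) :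
    ENNReal.ofReal (ρ * x * rexp (-(ρ * x))) ≤ expMeasure ρ (Set.Iio x) := by
  have hatom : expMeasure ρ {x} = 0 := by
    rw [expMeasure, gammaMeasure, withDensity_apply _ (measurableSet_singleton x)]
    simp
  have hIio : expMeasure ρ (Set.Iic x) ≤ expMeasure ρ (Set.Iio x) := by
    rw [← Set.Iio_union_right]
    refine (measure_union_le _ _).trans ?_
    rw [hatom, add_zero]
  refine le_trans ?_ hIio
  rw [expMeasure_Iic hρ hx.le]
  refine ENNReal.ofReal_le_ofReal ?_
  have h1 := Real.add_one_le_exp (ρ * x)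
  have h2 : rexp (ρ * x) * rexp (-(ρ * x)) = 1 := by
    rw [← Real.exp_add, add_neg_cancel, Real.exp_zero]
  nlinarith [Real.exp_pos (-(ρ * x))]

theorem expMeasure_Ioi {ρ x : ℝ} (hρ : 0 < ρ) (hx : 0 ≤ x) :
    expMeasure ρ (Set.Ioi x) = ENNReal.ofReal (rexp (-(ρ * x))) := by
  have := isProbabilityMeasure_expMeasure hρ
  have hle : rexp (-(ρ * x)) ≤ 1 := Real.exp_le_one_iff.2 (by nlinarith)
  rw [← Set.compl_Iic, prob_compl_eq_one_sub measurableSet_Iic, expMeasure_Iic hρ hx,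
    ← ENNReal.ofReal_one, ← ENNReal.ofReal_sub _ (by linarith)]
  congr 1
  ring

theorem stmt_5 (α β γ : ℝ) (hα : 0 < α) (hβ : 0 < β) (hγ : 0 < γ) :
    ∃ c : ℝ, 0 < c ∧
      ∀ (lmin lmax : ℝ), 0 < lmin → lmin ≤ lmax →
      ∀ (Ω : Type) (_ : MeasureSpace Ω) (_ : IsProbabilityMeasure (ℙ : Measure Ω))
        (W : ℝ → Ω → EuclideanSpace ℝ (Fin 2)) (E₁ E₂ : Ω → ℝ),
        IsPlanarBM W → Measurable E₁ → Measurable E₂ →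
        ∀ ρ₁ ρ₂ : ℝ, lmin ≤ ρ₁ → ρ₁ ≤ lmax → lmin ≤ ρ₂ → ρ₂ ≤ lmax →
        Measure.map E₁ ℙ = ProbabilityTheory.expMeasure ρ₁ →
        Measure.map E₂ ℙ = ProbabilityTheory.expMeasure ρ₂ →
        iIndep
          ![⨆ t : ℝ, MeasurableSpace.comap (W t) inferInstance,
            MeasurableSpace.comap E₁ inferInstance,
            MeasurableSpace.comap E₂ inferInstance] ℙ →
        ∀ r : ℝ, 0 < r → lmax * r ≤ 1 →
        ∀ v : EuclideanSpace ℝ (Fin 2), ‖v‖ ≤ 4 / 5 * r →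
        ENNReal.ofReal (c * r * lmin) ≤
          ℙ {ω | E₁ ω < α * r ∧ β * r < E₂ ω ∧
              ∀ t ∈ Set.Icc (0 : ℝ) (r ^ 2), ‖W t ω - (t / r ^ 2) • v‖ ≤ γ * r} := by
  obtain ⟨c, hc, htube⟩ := exists_le_measure_brownian_tube hγ
  refine ⟨α * rexp (-α) * rexp (-β) * c, by positivity, ?_⟩
  intro lmin lmax hmin _ Ω _ _ W E₁ E₂ hW hE₁ hE₂ ρ₁ ρ₂ hρ₁ hρ₁' hρ₂ hρ₂' hlaw₁ hlaw₂ hind r hr hlr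
    v hv
  obtain ⟨G, hGm, hGc, hG⟩ := htube Ω _ inferInstance W hW r hr v hv
  have hρ₁0 : 0 < ρ₁ := hmin.trans_le hρ₁
  have hρ₂0 : 0 < ρ₂ := hmin.trans_le hρ₂
  have hρ₁r : ρ₁ * r ≤ 1 := le_trans (by gcongr) hlr
  have hρ₂r : ρ₂ * r ≤ 1 := le_trans (by gcongr) hlr
  have hP₁ : ENNReal.ofReal (lmin * (α * r) * rexp (-α)) ≤ ℙ (E₁ ⁻¹' Set.Iio (α * r)) := by
    rw [← Measure.map_apply hE₁ measurableSet_Iio, hlaw₁]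
    refine le_trans (ENNReal.ofReal_le_ofReal ?_) (le_expMeasure_Iio hρ₁0 (by positivity))
    gcongr
    nlinarith
  have hP₂ : ENNReal.ofReal (rexp (-β)) ≤ ℙ (E₂ ⁻¹' Set.Ioi (β * r)) := by
    rw [← Measure.map_apply hE₂ measurableSet_Ioi, hlaw₂, expMeasure_Ioi hρ₂0 (by positivity)]
    refine ENNReal.ofReal_le_ofReal (Real.exp_le_exp.2 ?_)
    nlinarith
  have hprod := hind.meas_iInter
    (s := ![G, E₁ ⁻¹' Set.Iio (α * r), E₂ ⁻¹' Set.Ioi (β * r)]) (by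
      intro i
      fin_cases i
      · exact hGm
      · exact ⟨_, measurableSet_Iio, rfl⟩
      · exact ⟨_, measurableSet_Ioi, rfl⟩)
  rw [Fin.prod_univ_three] at hprod
  calc ENNReal.ofReal (α * rexp (-α) * rexp (-β) * c * r * lmin)
      = ENNReal.ofReal c * ENNReal.ofReal (lmin * (α * r) * rexp (-α)) *
          ENNReal.ofReal (rexp (-β)) := by
        rw [← ENNReal.ofReal_mul hc.le, ← ENNReal.ofReal_mul (by positivity)]
        congr 1
        ring
    _ ≤ ℙ G * ℙ (E₁ ⁻¹' Set.Iio (α * r)) * ℙ (E₂ ⁻¹' Set.Ioi (β * r)) := by gcongr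
    _ = ℙ (⋂ i, (![G, E₁ ⁻¹' Set.Iio (α * r), E₂ ⁻¹' Set.Ioi (β * r)] : Fin 3 → Set Ω) i) :=
        hprod.symm
    _ ≤ _ := by
        refine measure_mono_ae ?_
        filter_upwards [hG] with ω hω hmem
        have hmem' := Set.mem_iInter.1 hmem
        exact ⟨hmem' 1, hmem' 2, hω (hmem' 0)⟩
end
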